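/- If z_k = 0 for all k ≥ −1 and y_k = 0 for all k ≥ 0, then x_k = 0 for all k ≥ 0. -/

import Mathlib

/- STATEMENT 17.  If z_k = 0 for all k ≥ −1 and y_k = 0 for all k ≥ 0, then
x_k = 0 for all k ≥ 0. -/

noncomputable section

/-- index set for the variables of the large phase space of ℂP¹:
`none` is the genus parameter `ε`, `some (inl k)` is `sₖ`, `some (inr k)` is `tₖ`. -/
abbrev Idx : Type := Option (ℕ ⊕ ℕ)

/-- `ℚ[q]`. -/
abbrev Base : Type := Polynomial ℚ

/-- the large phase space ring `B = ℚ[q][[ε]][[s₀,s₁,…,t₀,t₁,…]]`, realized as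
formal power series over `ℚ[q]` in `ε` and the `sₖ`, `tₖ`. -/
abbrev B : Type := MvPowerSeries Idx Base

/-- coefficient extraction. -/
def cf (f : B) (m : Idx →₀ ℕ) : Base := f m

/-- build a power series from its coefficients. -/
def mk' (c : (Idx →₀ ℕ) → Base) : B := c

/-- the variable `sₖ`. -/
def sVar (k : ℕ) : B := MvPowerSeries.X (some (Sum.inl k))

/-- the variable `tₖ`. -/
def tVar (k : ℕ) : B := MvPowerSeries.X (some (Sum.inr k))

/-- the genus parameter `ε`. -/
def epsB : B := MvPowerSeries.X none

/-- `∂_{k,P} = ∂/∂sₖ`, coefficientwise. -/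
def pdP (k : ℕ) (f : B) : B :=
  mk' fun m => ((m (some (Sum.inl k)) : Base) + 1) *
    cf f (m + Finsupp.single (some (Sum.inl k)) 1)

/-- `∂_{k,Q} = ∂/∂tₖ`, coefficientwise. -/
def pdQ (k : ℕ) (f : B) : B :=
  mk' fun m => ((m (some (Sum.inr k)) : Base) + 1) *
    cf f (m + Finsupp.single (some (Sum.inr k)) 1)

/-- `∂ = ∂_{0,P}`. -/
def Dop : B → B := pdP 0

/-- `E^c = exp(cε∂) = Σₘ (cε)ᵐ∂ᵐ/m!`, well defined coefficientwise. -/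
def Ec (c : ℚ) (f : B) : B :=
  mk' fun m => ∑ j ∈ Finset.range (m none + 1),
    (c ^ j / (j.factorial : ℚ)) • cf (Dop^[j] f) (m - Finsupp.single none j)

/-- `∇ = ε⁻¹(E^{1/2} − E^{−1/2}) = Σ_{m≥1} (((1/2)ᵐ − (−1/2)ᵐ)/m!) εᵐ⁻¹ ∂ᵐ`,
well defined coefficientwise (the `m = 0` terms cancel, so no negative powers
of `ε` occur). -/
def nab (f : B) : B :=
  mk' fun m => ∑ j ∈ Finset.range (m none + 1),
    (((1/2 : ℚ) ^ (j+1) - (-1/2 : ℚ) ^ (j+1)) / ((j+1).factorial : ℚ)) •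
      cf (Dop^[j+1] f) (m - Finsupp.single none j)

/-- `Δ = E^{1/2} + E^{−1/2}`, coefficientwise. -/
def Delta (f : B) : B :=
  mk' fun m => ∑ j ∈ Finset.range (m none + 1),
    (((1/2 : ℚ) ^ j + (-1/2 : ℚ) ^ j) / (j.factorial : ℚ)) •
      cf (Dop^[j] f) (m - Finsupp.single none j)

variable (F : B)

/-- `⟨⟨τ_{i,Q}⟩⟩` for `i : ℤ`, with the convention `τ_{−1,Q} = 0`. -/
def tauQ (i : ℤ) : B := if 0 ≤ i then pdQ i.toNat F else 0

/-- `⟨⟨τ_{i,P}⟩⟩` for `i : ℤ`, with the convention `τ_{−1,P} = 0`. -/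
def tauP (i : ℤ) : B := if 0 ≤ i then pdP i.toNat F else 0

/-- `v = ∇∂_QF`. -/
def vB : B := nab (pdQ 0 F)

/-- the operator `𝒟 = v∇ + Δ∘∂_Q`. -/
def Dcal (g : B) : B := vB F * nab g + Delta (pdQ 0 g)

/-- `cₖᵐ = m(m+1)⋯(m+k)` (for `k ≥ −1`; the empty product `1` when `k = −1`). -/
def cc (k : ℤ) (m : ℕ) : ℚ := ∏ l ∈ Finset.range (k + 1).toNat, ((m : ℚ) + l)

/-- `dₖᵐ = eₖ(m, m+1, …, m+k)`, the `k`-th elementary symmetric function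
(`d₋₁ᵐ = 0`, `d₀ᵐ = 1`). -/
def dd (k : ℤ) (m : ℕ) : ℚ :=
  ∑ j ∈ Finset.range (k + 1).toNat,
    ∏ l ∈ (Finset.range (k + 1).toNat).erase j, ((m : ℚ) + l)

/-- the quadratic part `Σ_{i+j=k, i,j≥1} i!·j!·(ε²⟨⟨τ_{i−1,Q}τ_{j−1,Q}⟩⟩ +
⟨⟨τ_{i−1,Q}⟩⟩⟨⟨τ_{j−1,Q}⟩⟩)` of the Virasoro constraint. -/
def quad (k : ℤ) : B :=
  ∑ i ∈ Finset.range (k - 1).toNat,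
    (((i+1).factorial * ((k - (i+1)).toNat.factorial) : ℚ)) •
      (epsB ^ 2 * pdQ i (pdQ ((k - (i+2)).toNat) F) + pdQ i F * pdQ ((k - (i+2)).toNat) F)

/-- the Virasoro constraint `z_k`, `k ≥ −1`: the infinite sums
`Σₘ cₖ^{m+1}tₘ⟨⟨τ_{m+k,Q}⟩⟩ + cₖᵐsₘ⟨⟨τ_{m+k,P}⟩⟩ + 2dₖᵐsₘ⟨⟨τ_{m+k−1,Q}⟩⟩` are
well defined coefficientwise; the terms `s̃ₘ = sₘ − δ_{m,1}` contribute
the corrections `−cₖ¹⟨⟨τ_{k+1,P}⟩⟩ − 2dₖ¹⟨⟨τ_{k,Q}⟩⟩`. -/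
def z (k : ℤ) : B :=
  mk' (fun μ => ∑ j ∈ μ.support,
    match j with
    | some (Sum.inr m) => cc k (m+1) • cf (tauQ F ((m : ℤ) + k)) (μ - Finsupp.single j 1)
    | some (Sum.inl m) => cc k m • cf (tauP F ((m : ℤ) + k)) (μ - Finsupp.single j 1)
        + (2 * dd k m) • cf (tauQ F ((m : ℤ) + k - 1)) (μ - Finsupp.single j 1)
    | none => 0)
  - cc k 1 • tauP F (1 + k) - (2 * dd k 1) • tauQ F k
  + quad F k
  + (if k = -1 then sVar 0 * tVar 0 else 0)
  + (if k = 0 then sVar 0 ^ 2 else 0)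

/-- the constraint `y_k = 𝒟⟨⟨τ_{k,Q}⟩⟩ − (k+2)∇⟨⟨τ_{k+1,Q}⟩⟩`. -/
def y (k : ℕ) : B := Dcal F (pdQ k F) - ((k : ℚ) + 2) • nab (pdQ (k+1) F)

/-- the constraint `x_k = 𝒟⟨⟨τ_{k,P}⟩⟩ − (k+1)∇⟨⟨τ_{k+1,P}⟩⟩ − 2∇⟨⟨τ_{k,Q}⟩⟩`. -/
def x (k : ℕ) : B :=
  Dcal F (pdP k F) - ((k : ℚ) + 1) • nab (pdP (k+1) F) - (2 : ℚ) • nab (pdQ k F)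

/-- evaluation at `u = ε` of the formal power series `Σⱼ gⱼ uʲ`. -/
def epsEval (g : ℕ → B) : B :=
  mk' fun m => ∑ j ∈ Finset.range (m none + 1), cf (g j) (m - Finsupp.single none j)

theorem coeff_epsB_pow_mul (j : ℕ) (f : B) (m : Idx →₀ ℕ) :
    MvPowerSeries.coeff m (epsB ^ j * f) =
      if j ≤ m none then cf f (m - Finsupp.single none j) else 0 := by
  classical
  rw [epsB, MvPowerSeries.X_pow_eq, MvPowerSeries.coeff_monomial_mul]
  simp only [Finsupp.single_le_iff, one_mul]
  rfl

theorem epsB_pow_dvd_epsEval_sub (g : ℕ → B) (n : ℕ) :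
    epsB ^ n ∣ epsEval g - ∑ j ∈ Finset.range n, epsB ^ j * g j := by
  rw [epsB, MvPowerSeries.X_pow_dvd_iff]
  intro m hm
  rw [map_sub, map_sum, sub_eq_zero]
  change ∑ j ∈ Finset.range (m none + 1), cf (g j) (m - Finsupp.single none j) =
    ∑ j ∈ Finset.range n, MvPowerSeries.coeff m (epsB ^ j * g j)
  simp only [coeff_epsB_pow_mul]
  rw [← Finset.sum_filter]
  refine Finset.sum_congr ?_ fun _ _ => rfl
  ext j
  simp only [Finset.mem_range, Finset.mem_filter]
  omega

theorem eq_of_forall_epsB_pow_dvd_sub {f g : B} (h : ∀ n, epsB ^ n ∣ f - g) : f = g := by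
  rw [← sub_eq_zero]
  refine MvPowerSeries.ext fun m => ?_
  exact MvPowerSeries.X_pow_dvd_iff.mp (h (m none + 1)) m (Nat.lt_succ_self _)

theorem epsEval_eq_of_forall_dvd {g : ℕ → B} {f : B}
    (h : ∀ n, epsB ^ n ∣ f - ∑ j ∈ Finset.range n, epsB ^ j * g j) : epsEval g = f :=
  eq_of_forall_epsB_pow_dvd_sub fun n => by
    simpa using dvd_sub (epsB_pow_dvd_epsEval_sub g n) (h n)

theorem epsEval_add (g h : ℕ → B) : epsEval (g + h) = epsEval g + epsEval h := by
  refine MvPowerSeries.ext fun m => ?_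
  exact Finset.sum_add_distrib (f := fun j => cf (g j) (m - Finsupp.single none j))
    (g := fun j => cf (h j) (m - Finsupp.single none j)) (s := Finset.range (m none + 1))

theorem epsEval_smul (c : ℚ) (g : ℕ → B) : epsEval (c • g) = c • epsEval g := by
  refine MvPowerSeries.ext fun m => ?_
  exact (Finset.smul_sum (r := c) (f := fun j => cf (g j) (m - Finsupp.single none j))
    (s := Finset.range (m none + 1))).symm

theorem epsEval_eq_add (g : ℕ → B) : epsEval g = g 0 + epsB * epsEval fun j => g (j + 1) := by
  refine epsEval_eq_of_forall_dvd fun n => ?_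
  rcases n with _ | n
  · simp
  · rw [Finset.sum_range_succ', pow_zero, one_mul, add_comm (g 0), add_sub_add_right_eq_sub]
    have := mul_dvd_mul_left epsB (epsB_pow_dvd_epsEval_sub (fun j => g (j + 1)) n)
    rw [← pow_succ', mul_sub, Finset.mul_sum] at this
    simpa only [pow_succ', mul_assoc] using this

theorem epsEval_eq_zeroth {g : ℕ → B} (h : ∀ j, g (j + 1) = 0) : epsEval g = g 0 := by
  refine epsEval_eq_of_forall_dvd fun n => ?_
  rcases n with _ | n
  · simp
  · simp [Finset.sum_range_succ', h]

theorem epsEval_mul (g h : ℕ → B) :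
    epsEval g * epsEval h =
      epsEval fun n => ∑ p ∈ Finset.HasAntidiagonal.antidiagonal n, g p.1 * h p.2 := by
  symm
  refine epsEval_eq_of_forall_dvd fun n => ?_
  have hg := epsB_pow_dvd_epsEval_sub g n
  have hh := epsB_pow_dvd_epsEval_sub h n
  set G := ∑ j ∈ Finset.range n, epsB ^ j * g j
  set H := ∑ j ∈ Finset.range n, epsB ^ j * h j
  have key : epsB ^ n ∣ G * H - ∑ j ∈ Finset.range n,
      epsB ^ j * ∑ p ∈ Finset.HasAntidiagonal.antidiagonal j, g p.1 * h p.2 := by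
    let T (a : ℕ → B) : Polynomial B := ∑ j ∈ Finset.range n, Polynomial.monomial j (a j)
    have hT (a : ℕ → B) : (T a).eval epsB = ∑ j ∈ Finset.range n, epsB ^ j * a j := by
      simp [T, Polynomial.eval_finsetSum, mul_comm]
    have hc (a : ℕ → B) {d : ℕ} (hd : d < n) : (T a).coeff d = a d := by
      simp [T, Polynomial.coeff_monomial, hd]
    have hX : (Polynomial.X : Polynomial B) ^ n ∣
        T g * T h - T fun j => ∑ p ∈ Finset.HasAntidiagonal.antidiagonal j, g p.1 * h p.2 := by
      rw [Polynomial.X_pow_dvd_iff]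
      intro d hd
      rw [Polynomial.coeff_sub, Polynomial.coeff_mul, hc _ hd, sub_eq_zero]
      refine Finset.sum_congr rfl fun p hp => ?_
      rw [Finset.HasAntidiagonal.mem_antidiagonal] at hp
      rw [hc _ (by omega), hc _ (by omega)]
    have := map_dvd (Polynomial.evalRingHom epsB) hX
    simpa only [map_pow, map_sub, map_mul, Polynomial.coe_evalRingHom, Polynomial.eval_X,
      hT] using this
  have : epsEval g * epsEval h - ∑ j ∈ Finset.range n,
      epsB ^ j * ∑ p ∈ Finset.HasAntidiagonal.antidiagonal j, g p.1 * h p.2 =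
      (epsEval g - G) * epsEval h + G * (epsEval h - H) + (G * H - ∑ j ∈ Finset.range n,
      epsB ^ j * ∑ p ∈ Finset.HasAntidiagonal.antidiagonal j, g p.1 * h p.2) := by ring
  rw [this]
  exact dvd_add (dvd_add (hg.mul_right _) (hh.mul_left _)) key

theorem pdP_eq_pderiv (k : ℕ) (f : B) :
    pdP k f = MvPowerSeries.pderiv Base (some (Sum.inl k)) f := by
  refine MvPowerSeries.ext fun m => ?_
  rw [MvPowerSeries.coeff_pderiv]
  exact mul_comm _ _

theorem pdQ_eq_pderiv (k : ℕ) (f : B) :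
    pdQ k f = MvPowerSeries.pderiv Base (some (Sum.inr k)) f := by
  refine MvPowerSeries.ext fun m => ?_
  rw [MvPowerSeries.coeff_pderiv]
  exact mul_comm _ _

theorem pderiv_comm (i j : Idx) (f : B) :
    MvPowerSeries.pderiv Base i (MvPowerSeries.pderiv Base j f) =
      MvPowerSeries.pderiv Base j (MvPowerSeries.pderiv Base i f) := by
  rcases eq_or_ne i j with rfl | h
  · rfl
  refine MvPowerSeries.ext fun m => ?_
  simp only [MvPowerSeries.coeff_pderiv, Finsupp.add_apply, Finsupp.single_eq_of_ne h,
    Finsupp.single_eq_of_ne h.symm, add_zero]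
  rw [add_right_comm]
  ring

theorem pderiv_epsEval (i : ℕ ⊕ ℕ) (g : ℕ → B) :
    MvPowerSeries.pderiv Base (some i) (epsEval g) =
      epsEval fun j => MvPowerSeries.pderiv Base (some i) (g j) := by
  symm
  refine epsEval_eq_of_forall_dvd fun n => ?_
  obtain ⟨r, hr⟩ := epsB_pow_dvd_epsEval_sub g n
  have h0 (j : ℕ) : MvPowerSeries.pderiv Base (some i) (epsB ^ j) = 0 := by
    rw [Derivation.leibniz_pow, epsB, MvPowerSeries.pderiv_X_of_ne (by simp)]
    simp
  refine ⟨MvPowerSeries.pderiv Base (some i) r, ?_⟩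
  have := congrArg (MvPowerSeries.pderiv Base (some i)) hr
  simpa [Derivation.leibniz, h0] using this

theorem Dop_eq_pderiv : Dop = MvPowerSeries.pderiv Base (some (Sum.inl 0)) :=
  funext fun f => pdP_eq_pderiv 0 f

theorem iterate_Dop_mul (n : ℕ) (f g : B) :
    Dop^[n] (f * g) =
      ∑ p ∈ Finset.HasAntidiagonal.antidiagonal n, n.choose p.1 • (Dop^[p.1] f * Dop^[p.2] g) := by
  induction n with
  | zero => simp
  | succ n ih =>
    rw [Function.iterate_succ_apply', ih,
      Finset.sum_antidiagonal_choose_succ_nsmul (fun i j => Dop^[i] f * Dop^[j] g)]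
    simp only [Function.iterate_succ_apply']
    rw [← Finset.sum_add_distrib]
    conv_lhs => rw [Dop_eq_pderiv, map_sum]
    refine Finset.sum_congr rfl fun p hp => ?_
    rw [Nat.choose_symm_of_eq_add (Finset.HasAntidiagonal.mem_antidiagonal.mp hp).symm, map_nsmul,
      Derivation.leibniz, ← Dop_eq_pderiv, smul_add, smul_eq_mul, smul_eq_mul,
      mul_comm (Dop^[p.2] g)]

theorem Ec_eq_epsEval (c : ℚ) (f : B) :
    Ec c f = epsEval fun j => (c ^ j / (j.factorial : ℚ)) • Dop^[j] f := rfl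

theorem Ec_mul (c : ℚ) (f g : B) : Ec c (f * g) = Ec c f * Ec c g := by
  simp only [Ec_eq_epsEval, epsEval_mul]
  refine congrArg epsEval (funext fun n => ?_)
  rw [iterate_Dop_mul, Finset.smul_sum]
  refine Finset.sum_congr rfl fun p hp => ?_
  obtain ⟨i, j⟩ := p
  obtain rfl := (Finset.HasAntidiagonal.mem_antidiagonal.mp hp).symm
  rw [smul_mul_smul_comm, ← Nat.cast_smul_eq_nsmul ℚ, smul_smul]
  congr 1
  dsimp only
  rw [Nat.cast_add_choose, pow_add]
  have := Nat.cast_ne_zero (R := ℚ).mpr (i + j).factorial_ne_zero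
  field_simp

theorem Delta_eq_Ec (f : B) : Delta f = Ec (1/2) f + Ec (-1/2) f := by
  simp only [Ec_eq_epsEval, ← epsEval_add]
  refine congrArg epsEval (a₁ := fun j =>
    (((1/2 : ℚ) ^ j + (-1/2 : ℚ) ^ j) / (j.factorial : ℚ)) • Dop^[j] f) (funext fun j => ?_)
  simp only [Pi.add_apply, ← add_smul, add_div]

theorem epsB_mul_nab (f : B) : epsB * nab f = Ec (1/2) f - Ec (-1/2) f := by
  have h : epsB * nab f = epsEval fun j =>
      (((1/2 : ℚ) ^ j - (-1/2 : ℚ) ^ j) / (j.factorial : ℚ)) • Dop^[j] f :=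
    (by
      rw [epsEval_eq_add]
      simp only [pow_zero, sub_self, zero_div, zero_smul, zero_add]
      rfl)
  rw [h, eq_sub_iff_add_eq]
  simp only [Ec_eq_epsEval, ← epsEval_add]
  congr 1
  funext j
  simp only [Pi.add_apply, ← add_smul, ← add_div, sub_add_cancel]

theorem epsB_ne_zero : epsB ≠ 0 := fun h => by
  have := congrArg (MvPowerSeries.coeff (Finsupp.single none 1)) h
  simp [epsB] at this

theorem two_mul_Delta_mul (f g : B) :
    2 * Delta (f * g) = Delta f * Delta g + epsB ^ 2 * (nab f * nab g) := by
  have : epsB ^ 2 * (nab f * nab g) = (epsB * nab f) * (epsB * nab g) := by ring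
  rw [this, epsB_mul_nab, epsB_mul_nab]
  simp only [Delta_eq_Ec, Ec_mul]
  ring

theorem two_mul_nab_mul (f g : B) :
    2 * nab (f * g) = Delta f * nab g + nab f * Delta g := by
  refine mul_left_cancel₀ epsB_ne_zero ?_
  have : epsB * (Delta f * nab g + nab f * Delta g) =
    Delta f * (epsB * nab g) + (epsB * nab f) * Delta g := by ring
  rw [mul_left_comm, this]
  simp only [epsB_mul_nab, Delta_eq_Ec, Ec_mul]
  ring

/-- the operator `Σⱼ aⱼ εʲ ∂^{e(j)}`. -/
def epsSeries (a : ℕ → ℚ) (e : ℕ → ℕ) : B →ₗ[ℚ] B where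
  toFun f := epsEval fun j => a j • Dop^[e j] f
  map_add' f g := by
    rw [← epsEval_add]
    refine congrArg epsEval (funext fun j => ?_)
    rw [Dop_eq_pderiv, iterate_map_add, smul_add]
    rfl
  map_smul' c f := by
    have h (n : ℕ) : Dop^[n] (c • f) = c • Dop^[n] f := by
      induction n with
      | zero => rfl
      | succ n ih =>
        rw [Function.iterate_succ_apply', ih, Function.iterate_succ_apply', Dop_eq_pderiv,
          map_rat_smul]
    simp only [RingHom.id_apply]
    rw [← epsEval_smul]
    refine congrArg epsEval (funext fun j => ?_)
    rw [h, smul_comm]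
    rfl

/-- `∇` as a linear map. -/
def nabL : B →ₗ[ℚ] B :=
  epsSeries (fun j => ((1/2 : ℚ) ^ (j+1) - (-1/2 : ℚ) ^ (j+1)) / ((j+1).factorial : ℚ)) (· + 1)

/-- `Δ` as a linear map. -/
def deltaL : B →ₗ[ℚ] B :=
  epsSeries (fun j => ((1/2 : ℚ) ^ j + (-1/2 : ℚ) ^ j) / (j.factorial : ℚ)) id

theorem nab_eq_nabL : nab = nabL := rfl

theorem Delta_eq_deltaL : Delta = deltaL := rfl

theorem pderiv_epsSeries (a : ℕ → ℚ) (e : ℕ → ℕ) (i : ℕ ⊕ ℕ) (f : B) :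
    MvPowerSeries.pderiv Base (some i) (epsSeries a e f) =
      epsSeries a e (MvPowerSeries.pderiv Base (some i) f) := by
  refine (pderiv_epsEval i _).trans (congrArg epsEval (funext fun j => ?_))
  rw [map_rat_smul]
  congr 1
  induction e j with
  | zero => rfl
  | succ n ih => rw [Function.iterate_succ_apply', Function.iterate_succ_apply', ← ih,
      Dop_eq_pderiv, pderiv_comm]

theorem pdQ_nab (k : ℕ) (f : B) : pdQ k (nab f) = nab (pdQ k f) := by
  rw [pdQ_eq_pderiv, pdQ_eq_pderiv]
  exact pderiv_epsSeries _ _ _ _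

theorem pdQ_Delta (k : ℕ) (f : B) : pdQ k (Delta f) = Delta (pdQ k f) := by
  rw [pdQ_eq_pderiv, pdQ_eq_pderiv]
  exact pderiv_epsSeries _ _ _ _

theorem pdQ_comm (j k : ℕ) (f : B) : pdQ j (pdQ k f) = pdQ k (pdQ j f) := by
  simp only [pdQ_eq_pderiv, pderiv_comm]

theorem pdQ_add (k : ℕ) (f g : B) : pdQ k (f + g) = pdQ k f + pdQ k g := by
  simp only [pdQ_eq_pderiv, map_add]

theorem pdQ_smul (k : ℕ) (c : ℚ) (f : B) : pdQ k (c • f) = c • pdQ k f := by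
  simp only [pdQ_eq_pderiv, map_rat_smul]

theorem pdQ_mul (k : ℕ) (f g : B) : pdQ k (f * g) = f * pdQ k g + pdQ k f * g := by
  simp only [pdQ_eq_pderiv, Derivation.leibniz, smul_eq_mul, mul_comm g]

theorem Dop_sVar (m : ℕ) : Dop (sVar m) = if m = 0 then 1 else 0 := by
  rw [Dop_eq_pderiv, sVar]
  split_ifs with h
  · subst h
    exact MvPowerSeries.pderiv_X_self
  · exact MvPowerSeries.pderiv_X_of_ne (by simpa using h)

theorem Dop_tVar (m : ℕ) : Dop (tVar m) = 0 := by
  rw [Dop_eq_pderiv, tVar]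
  exact MvPowerSeries.pderiv_X_of_ne (by simp)

theorem pdQ_sVar (k m : ℕ) : pdQ k (sVar m) = 0 := by
  rw [pdQ_eq_pderiv, sVar]
  exact MvPowerSeries.pderiv_X_of_ne (by simp)

theorem pdQ_zero_tVar (m : ℕ) : pdQ 0 (tVar m) = if m = 0 then 1 else 0 := by
  rw [pdQ_eq_pderiv, tVar]
  split_ifs with h
  · subst h
    exact MvPowerSeries.pderiv_X_self
  · exact MvPowerSeries.pderiv_X_of_ne (by simpa using h)

theorem pdQ_epsB (k : ℕ) : pdQ k epsB = 0 := by
  rw [pdQ_eq_pderiv, epsB]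
  exact MvPowerSeries.pderiv_X_of_ne (by simp)

theorem Dop_epsB : Dop epsB = 0 := by
  rw [Dop_eq_pderiv, epsB]
  exact MvPowerSeries.pderiv_X_of_ne (by simp)

theorem iterate_Dop_eq_zero {f : B} (h : Dop (Dop f) = 0) (n : ℕ) : Dop^[n + 2] f = 0 := by
  rw [Function.iterate_add_apply]
  change Dop^[n] (Dop (Dop f)) = 0
  rw [h, Dop_eq_pderiv, iterate_map_zero]

theorem nab_eq_Dop {f : B} (h : Dop (Dop f) = 0) : nab f = Dop f := by
  refine (epsEval_eq_zeroth (g := fun j =>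
    (((1/2 : ℚ) ^ (j+1) - (-1/2 : ℚ) ^ (j+1)) / ((j+1).factorial : ℚ)) • Dop^[j+1] f)
    fun j => ?_).trans ?_
  · rw [iterate_Dop_eq_zero h, smul_zero]
  · norm_num

theorem Delta_eq_two_mul {f : B} (h : Dop (Dop f) = 0) : Delta f = 2 * f := by
  refine (epsEval_eq_zeroth (g := fun j =>
    (((1/2 : ℚ) ^ j + (-1/2 : ℚ) ^ j) / (j.factorial : ℚ)) • Dop^[j] f) fun j => ?_).trans ?_
  · rcases j with _ | j
    · norm_num
    · rw [iterate_Dop_eq_zero h, smul_zero]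
  · norm_num [two_smul, two_mul]

theorem Dop_zero : Dop 0 = 0 := by rw [Dop_eq_pderiv, map_zero]

theorem Dop_one : Dop 1 = 0 := by rw [Dop_eq_pderiv, Derivation.map_one_eq_zero]

theorem Dop_Dop_sVar (m : ℕ) : Dop (Dop (sVar m)) = 0 := by
  rw [Dop_sVar]
  split_ifs
  exacts [Dop_one, Dop_zero]

theorem Dop_Dop_tVar (m : ℕ) : Dop (Dop (tVar m)) = 0 := by
  rw [Dop_tVar, Dop_zero]

theorem two_mul_half_smul (f : B) : 2 * ((1/2 : ℚ) • f) = f := by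
  rw [two_mul, ← add_smul]
  norm_num

theorem two_ne_zero_B : (2 : B) ≠ 0 := fun h => by
  have := congrArg (MvPowerSeries.coeff 0) (h.trans (zero_mul (1 : B)).symm)
  rw [← map_ofNat (MvPowerSeries.C (σ := Idx) (R := Base)) 2] at this
  simp at this

theorem nab_sVar_mul (m : ℕ) (g : B) :
    nab (sVar m * g) = sVar m * nab g + if m = 0 then (1/2 : ℚ) • Delta g else 0 := by
  refine mul_left_cancel₀ two_ne_zero_B ?_
  rw [two_mul_nab_mul, nab_eq_Dop (Dop_Dop_sVar m), Delta_eq_two_mul (Dop_Dop_sVar m),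
    Dop_sVar, mul_add, mul_ite, two_mul_half_smul]
  split_ifs <;> ring

theorem Delta_sVar_mul (m : ℕ) (g : B) :
    Delta (sVar m * g) =
      sVar m * Delta g + if m = 0 then (1/2 : ℚ) • (epsB ^ 2 * nab g) else 0 := by
  refine mul_left_cancel₀ two_ne_zero_B ?_
  rw [two_mul_Delta_mul, nab_eq_Dop (Dop_Dop_sVar m), Delta_eq_two_mul (Dop_Dop_sVar m),
    Dop_sVar, mul_add, mul_ite, two_mul_half_smul]
  split_ifs <;> ring

theorem nab_tVar_mul (m : ℕ) (g : B) : nab (tVar m * g) = tVar m * nab g := by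
  refine mul_left_cancel₀ two_ne_zero_B ?_
  rw [two_mul_nab_mul, nab_eq_Dop (Dop_Dop_tVar m), Delta_eq_two_mul (Dop_Dop_tVar m), Dop_tVar]
  ring

theorem Delta_tVar_mul (m : ℕ) (g : B) : Delta (tVar m * g) = tVar m * Delta g := by
  refine mul_left_cancel₀ two_ne_zero_B ?_
  rw [two_mul_Delta_mul, nab_eq_Dop (Dop_Dop_tVar m), Delta_eq_two_mul (Dop_Dop_tVar m), Dop_tVar]
  ring

theorem nab_epsB_sq_mul (g : B) : nab (epsB ^ 2 * g) = epsB ^ 2 * nab g := by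
  have h : Dop (epsB ^ 2) = 0 := by
    rw [Dop_eq_pderiv, Derivation.leibniz_pow, ← Dop_eq_pderiv, Dop_epsB, smul_zero, smul_zero]
  refine mul_left_cancel₀ two_ne_zero_B ?_
  have h' : Dop (Dop (epsB ^ 2)) = 0 := by rw [h, Dop_zero]
  rw [two_mul_nab_mul, nab_eq_Dop h', Delta_eq_two_mul h', h]
  ring

theorem Delta_epsB_sq_mul (g : B) : Delta (epsB ^ 2 * g) = epsB ^ 2 * Delta g := by
  have h : Dop (epsB ^ 2) = 0 := by
    rw [Dop_eq_pderiv, Derivation.leibniz_pow, ← Dop_eq_pderiv, Dop_epsB, smul_zero, smul_zero]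
  refine mul_left_cancel₀ two_ne_zero_B ?_
  have h' : Dop (Dop (epsB ^ 2)) = 0 := by rw [h, Dop_zero]
  rw [two_mul_Delta_mul, nab_eq_Dop h', Delta_eq_two_mul h', h]
  ring

/-- `𝒟` as a linear map. -/
def DcalL (F : B) : B →ₗ[ℚ] B where
  toFun := Dcal F
  map_add' f g := by
    simp only [Dcal, pdQ_add, nab_eq_nabL, Delta_eq_deltaL, map_add]
    ring
  map_smul' c f := by
    simp only [Dcal, pdQ_smul, nab_eq_nabL, Delta_eq_deltaL, map_smul, smul_add,
      mul_smul_comm, RingHom.id_apply]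

theorem Dcal_eq_DcalL (F : B) : Dcal F = DcalL F := rfl

theorem Dcal_sVar_mul (F : B) (m : ℕ) (g : B) :
    Dcal F (sVar m * g) = sVar m * Dcal F g +
      if m = 0 then (1/2 : ℚ) • (vB F * Delta g + epsB ^ 2 * nab (pdQ 0 g)) else 0 := by
  simp only [Dcal, pdQ_mul, pdQ_sVar, zero_mul, add_zero, nab_sVar_mul, Delta_sVar_mul]
  split_ifs
  · rw [smul_add, mul_add, mul_smul_comm]
    ring
  · ring

theorem Dcal_tVar_mul (F : B) (m : ℕ) (g : B) :
    Dcal F (tVar m * g) = tVar m * Dcal F g + if m = 0 then Delta g else 0 := by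
  simp only [Dcal, pdQ_mul, pdQ_zero_tVar, nab_tVar_mul]
  rw [Delta_eq_deltaL, map_add, ← Delta_eq_deltaL, Delta_tVar_mul, ite_mul, one_mul, zero_mul]
  split_ifs
  · ring
  · rw [Delta_eq_deltaL, map_zero]
    ring

theorem Dcal_mul (F f g : B) :
    Dcal F (f * g) = (1/2 : ℚ) • (Dcal F f * Delta g + Dcal F g * Delta f +
      epsB ^ 2 * (nab (pdQ 0 f) * nab g + nab f * nab (pdQ 0 g))) := by
  refine mul_left_cancel₀ two_ne_zero_B ?_
  rw [two_mul_half_smul, Dcal, pdQ_mul, Delta_eq_deltaL, map_add, ← Delta_eq_deltaL, mul_add,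
    mul_add, mul_left_comm, two_mul_nab_mul, two_mul_Delta_mul, two_mul_Delta_mul, Dcal, Dcal]
  ring

theorem Dcal_epsB_sq_mul (F g : B) : Dcal F (epsB ^ 2 * g) = epsB ^ 2 * Dcal F g := by
  have h : pdQ 0 (epsB ^ 2) = 0 := by
    rw [pow_two, pdQ_mul, pdQ_epsB, mul_zero, zero_mul, add_zero]
  rw [Dcal, pdQ_mul, h, zero_mul, add_zero, nab_epsB_sq_mul, Delta_epsB_sq_mul, Dcal]
  ring

theorem Dcal_pdQ (F g : B) (i : ℕ) :
    Dcal F (pdQ i g) = pdQ i (Dcal F g) - nab (pdQ 0 (pdQ i F)) * nab g := by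
  rw [Dcal, Dcal, pdQ_add, pdQ_mul, pdQ_nab, pdQ_Delta, vB, pdQ_nab, pdQ_comm i 0 g,
    pdQ_comm i 0 F]
  ring

theorem cc_natCast_sub_one (n m : ℕ) :
    cc ((n : ℤ) - 1) m = ∏ l ∈ Finset.range n, ((m : ℚ) + l) := by
  simp [cc]

theorem dd_natCast_sub_one (n m : ℕ) :
    dd ((n : ℤ) - 1) m =
      ∑ j ∈ Finset.range n, ∏ l ∈ (Finset.range n).erase j, ((m : ℚ) + l) := by
  simp [dd]

theorem exists_eq_natCast_sub_one {k : ℤ} (hk : -1 ≤ k) : ∃ n : ℕ, k = (n : ℤ) - 1 :=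
  ⟨(k + 1).toNat, by omega⟩

theorem cc_succ {k : ℤ} (hk : -1 ≤ k) (m : ℕ) : cc (k + 1) m = cc k m * ((m : ℚ) + k + 1) := by
  obtain ⟨n, rfl⟩ := exists_eq_natCast_sub_one hk
  have h : (n : ℤ) - 1 + 1 = ((n + 1 : ℕ) : ℤ) - 1 := by push_cast; ring
  rw [h, cc_natCast_sub_one, cc_natCast_sub_one, Finset.prod_range_succ]
  push_cast
  ring

theorem dd_succ {k : ℤ} (hk : -1 ≤ k) (m : ℕ) :
    dd (k + 1) m = dd k m * ((m : ℚ) + k + 1) + cc k m := by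
  obtain ⟨n, rfl⟩ := exists_eq_natCast_sub_one hk
  have h : (n : ℤ) - 1 + 1 = ((n + 1 : ℕ) : ℤ) - 1 := by push_cast; ring
  rw [h, cc_natCast_sub_one, dd_natCast_sub_one, dd_natCast_sub_one, Finset.sum_range_succ,
    Finset.sum_mul]
  congr 1
  · refine Finset.sum_congr rfl fun j hj => ?_
    have hj' := Finset.mem_range.mp hj
    rw [Finset.range_add_one, Finset.erase_insert_of_ne (by omega), Finset.prod_insert (by simp)]
    push_cast
    ring
  · rw [Finset.range_add_one, Finset.erase_insert (by simp)]

theorem cc_zero_right {k : ℤ} (hk : 0 ≤ k) : cc k 0 = 0 := by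
  rw [cc]
  refine Finset.prod_eq_zero (i := 0) (Finset.mem_range.mpr (by omega)) (by simp)

theorem cc_one_right (n : ℕ) : cc ((n : ℤ) - 1) 1 = n.factorial := by
  rw [cc_natCast_sub_one]
  induction n with
  | zero => simp
  | succ n ih =>
    rw [Finset.prod_range_succ, ih, Nat.factorial_succ]
    push_cast
    ring

theorem dd_neg_one (m : ℕ) : dd (-1) m = 0 := by simp [dd]

theorem cc_neg_one (m : ℕ) : cc (-1) m = 1 := by simp [cc]

theorem dd_natCast_zero (n : ℕ) : dd n 0 = n.factorial := by
  induction n with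
  | zero => simp [dd]
  | succ n ih =>
    have := dd_succ (k := n) (by omega) 0
    push_cast at this ⊢
    rw [this, ih, cc_zero_right (by omega), Nat.factorial_succ]
    push_cast
    ring

theorem dd_succ_zero {k : ℤ} (hk : -1 ≤ k) : dd (k + 1) 0 = cc k 1 := by
  obtain ⟨n, rfl⟩ := exists_eq_natCast_sub_one hk
  rw [cc_one_right, sub_add_cancel, dd_natCast_zero]

theorem tauQ_natCast (F : B) (n : ℕ) : tauQ F n = pdQ n F := by simp [tauQ]

theorem tauP_natCast (F : B) (n : ℕ) : tauP F n = pdP n F := by simp [tauP]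

theorem tauQ_of_neg (F : B) {i : ℤ} (hi : i < 0) : tauQ F i = 0 := if_neg (by omega)

theorem tauP_of_neg (F : B) {i : ℤ} (hi : i < 0) : tauP F i = 0 := if_neg (by omega)

theorem Dcal_tauQ {F : B} (hy : ∀ k : ℕ, y F k = 0) (i : ℤ) :
    Dcal F (tauQ F i) =
      ((i : ℚ) + 2) • nab (tauQ F (i + 1)) - if i = -1 then vB F else 0 := by
  rcases lt_trichotomy i (-1) with hi | rfl | hi
  · rw [tauQ_of_neg F (by omega), tauQ_of_neg F (by omega), if_neg (by omega), Dcal_eq_DcalL,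
      nab_eq_nabL]
    simp
  · have h := tauQ_natCast F 0
    rw [tauQ_of_neg F (by omega), Dcal_eq_DcalL, map_zero, if_pos rfl, vB]
    norm_num at h ⊢
    rw [h, sub_self]
  · lift i to ℕ using by omega
    rw [tauQ_natCast, if_neg (by omega), sub_zero]
    have h := tauQ_natCast F (i + 1)
    push_cast at h ⊢
    rw [h]
    exact sub_eq_zero.mp (hy i)

/-- `x_i` for `i : ℤ`, built from the extended correlators. -/
def xInt (F : B) (i : ℤ) : B :=
  Dcal F (tauP F i) - ((i : ℚ) + 1) • nab (tauP F (i + 1)) - (2 : ℚ) • nab (tauQ F i)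

theorem xInt_natCast (F : B) (k : ℕ) : xInt F k = x F k := by
  have h := tauP_natCast F (k + 1)
  push_cast at h
  rw [xInt, tauP_natCast, tauQ_natCast, h, x]
  rfl

theorem xInt_neg_one (F : B) : xInt F (-1) = 0 := by
  rw [xInt, tauP_of_neg F (by omega), tauQ_of_neg F (by omega), Dcal_eq_DcalL, nab_eq_nabL]
  simp

/-- the `m`-th summand of the linear part of the Virasoro constraint, without dilaton shift. -/
def linTerm (F : B) (k : ℤ) (m : ℕ) : B :=
  cc k (m + 1) • (tVar m * tauQ F (m + k)) + cc k m • (sVar m * tauP F (m + k)) +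
    (2 * dd k m) • (sVar m * tauQ F (m + k - 1))

/-- the contribution of `s₀` and `t₀` to `𝒟 z_k − ∇ z_{k+1}` beyond the `x`-terms. -/
def zeroBracket (F : B) (k : ℤ) : B :=
  dd k 0 • (vB F * Delta (tauQ F (k - 1)) + epsB ^ 2 * nab (pdQ 0 (tauQ F (k - 1)))) -
    (if k = -1 then tVar 0 * vB F else 0) - if k = 0 then (2 : ℚ) • (sVar 0 * vB F) else 0

theorem cc_zero_smul_tauP_eq_zero (F : B) {k : ℤ} (hk : -1 ≤ k) {f : B → B} (hf : f 0 = 0) :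
    cc k 0 • f (tauP F k) = 0 := by
  rcases hk.eq_or_lt with rfl | hk
  · rw [tauP_of_neg F (by omega), hf, smul_zero]
  · rw [cc_zero_right (by omega), zero_smul]

theorem Dcal_linTerm_sub_nab_linTerm {F : B} (hy : ∀ k : ℕ, y F k = 0) {k : ℤ} (hk : -1 ≤ k)
    (m : ℕ) :
    Dcal F (linTerm F k m) - nab (linTerm F (k + 1) m) =
      cc k m • (sVar m * xInt F (m + k)) + if m = 0 then zeroBracket F k else 0 := by
  have e1 : (m : ℤ) + (k + 1) = m + k + 1 := by ring
  have e2 : (m : ℤ) + k + 1 - 1 = m + k := by ring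
  have e3 : (m : ℤ) + k - 1 + 1 = m + k := by ring
  rw [linTerm, linTerm, Dcal_eq_DcalL, nab_eq_nabL]
  simp only [map_add, map_smul]
  simp only [← Dcal_eq_DcalL, ← nab_eq_nabL]
  simp only [Dcal_sVar_mul, Dcal_tVar_mul, nab_sVar_mul, nab_tVar_mul, Dcal_tauQ hy, xInt,
    e1, e2, e3, cc_succ hk, dd_succ hk]
  rcases Nat.eq_zero_or_pos m with rfl | hm
  · have h1 : cc k 0 • (vB F * Delta (tauP F k) + epsB ^ 2 * nab (pdQ 0 (tauP F k))) = 0 :=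
      cc_zero_smul_tauP_eq_zero F hk
        (f := fun g => vB F * Delta g + epsB ^ 2 * nab (pdQ 0 g)) (by
          simp only [pdQ_eq_pderiv, nab_eq_nabL, Delta_eq_deltaL, map_zero, mul_zero, add_zero])
    have h2 : (cc k 0 * ((0 : ℕ) + (k : ℚ) + 1)) • Delta (tauP F (k + 1)) = 0 := by
      rw [← cc_succ hk, cc_zero_right (by omega), zero_smul]
    have h3 : dd k 0 * ((0 : ℕ) + (k : ℚ) + 1) + cc k 0 = cc k 1 := by
      rw [← dd_succ hk, dd_succ_zero hk]
    have h4 : cc k 1 • (tVar 0 * if k = -1 then vB F else 0) =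
        if k = -1 then tVar 0 * vB F else 0 := by
      split_ifs with h
      · rw [h, cc_neg_one, one_smul]
      · rw [mul_zero, smul_zero]
    have h5 : (2 * dd k 0) • (sVar 0 * if k - 1 = -1 then vB F else 0) =
        if k = 0 then (2 : ℚ) • (sVar 0 * vB F) else 0 := by
      have : (k - 1 = -1) ↔ k = 0 := by omega
      simp only [this]
      split_ifs with h
      · subst h
        have := dd_natCast_zero 0
        norm_num at this
        rw [this, mul_one]
      · rw [mul_zero, smul_zero]
    simp only [if_true, zeroBracket, ← h4, ← h5]
    simp only [Nat.cast_zero, zero_add] at h1 h2 h3 ⊢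
    simp only [mul_sub, mul_smul_comm, smul_sub, smul_add, mul_add] at h1 h2 ⊢
    push_cast
    have h3' : (dd k 0 * ((k : ℚ) + 1) + cc k 0) • Delta (tauQ F k) = cc k 1 • Delta (tauQ F k) := by
      rw [h3]
    linear_combination (norm := module) (1/2 : ℚ) • h1 - (1/2 : ℚ) • h2 - h3'
  · have h6 : ¬ m = 0 := by omega
    have h4 : (m : ℤ) + k ≠ -1 := by omega
    have h5 : dd k m • (if (m : ℤ) + k - 1 = -1 then vB F else 0) = 0 := by
      split_ifs with h
      · have : k = -1 := by omega
        rw [this, dd_neg_one, zero_smul]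
      · rw [smul_zero]
    have h5' := congrArg (sVar m * ·) h5
    simp only [if_neg h6, if_neg h4]
    simp only [mul_sub, mul_smul_comm, smul_sub, smul_add, mul_add, mul_zero, smul_zero] at h5' ⊢
    push_cast
    linear_combination (norm := module) (-2 : ℚ) • h5'

/-- the quadratic expression `ε²⟨⟨τ_{i,Q}τ_{j,Q}⟩⟩ + ⟨⟨τ_{i,Q}⟩⟩⟨⟨τ_{j,Q}⟩⟩`. -/
def quadTerm (F : B) (i j : ℕ) : B := epsB ^ 2 * pdQ i (pdQ j F) + pdQ i F * pdQ j F

/-- one half of the symmetric expression `2∇(ε²⟨⟨τ_{i,Q}τ_{j,Q}⟩⟩ + ⟨⟨τ_{i,Q}⟩⟩⟨⟨τ_{j,Q}⟩⟩)`. -/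
def nabHalf (F : B) (i j : ℕ) : B :=
  epsB ^ 2 * nab (pdQ i (pdQ j F)) + nab (pdQ j F) * Delta (pdQ i F)

theorem nab_quadTerm (F : B) (i j : ℕ) :
    nab (quadTerm F i j) = (1/2 : ℚ) • (nabHalf F i j + nabHalf F j i) := by
  refine mul_left_cancel₀ two_ne_zero_B ?_
  rw [two_mul_half_smul, quadTerm, nab_eq_nabL, map_add, ← nab_eq_nabL, mul_add, two_mul_nab_mul (pdQ i F),
    nab_epsB_sq_mul, nabHalf, nabHalf, pdQ_comm j i]
  ring

theorem Dcal_quadTerm {F : B} (hy : ∀ k : ℕ, y F k = 0) (i j : ℕ) :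
    Dcal F (quadTerm F i j) = (1/2 : ℚ) • (((j : ℚ) + 2) • nabHalf F i (j + 1) +
      ((i : ℚ) + 2) • nabHalf F j (i + 1)) := by
  have hD (j : ℕ) : Dcal F (pdQ j F) = ((j : ℚ) + 2) • nab (pdQ (j + 1) F) :=
    sub_eq_zero.mp (hy j)
  have hDD (i j : ℕ) : Dcal F (pdQ i (pdQ j F)) = ((j : ℚ) + 2) • nab (pdQ i (pdQ (j + 1) F)) -
      nab (pdQ 0 (pdQ i F)) * nab (pdQ j F) := by
    rw [Dcal_pdQ, hD, pdQ_smul, pdQ_nab]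
  have h2 : 2 * Dcal F (pdQ i (pdQ j F)) = Dcal F (pdQ i (pdQ j F)) + Dcal F (pdQ j (pdQ i F)) := by
    rw [pdQ_comm j i, two_mul]
  refine mul_left_cancel₀ two_ne_zero_B ?_
  rw [two_mul_half_smul, quadTerm, Dcal_eq_DcalL, map_add, ← Dcal_eq_DcalL, mul_add, Dcal_mul F (pdQ i F),
    two_mul_half_smul, Dcal_epsB_sq_mul, mul_left_comm, h2, hDD, hDD, hD, hD, nabHalf, nabHalf]
  simp only [smul_add, mul_sub, mul_add, mul_smul_comm, smul_mul_assoc]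
  ring

theorem quad_natCast_add_two (F : B) (p : ℕ) :
    quad F ((p : ℤ) + 2) = ∑ ij ∈ Finset.HasAntidiagonal.antidiagonal p,
      ((ij.1 + 1).factorial * (ij.2 + 1).factorial : ℚ) • quadTerm F ij.1 ij.2 := by
  rw [Finset.Nat.sum_antidiagonal_eq_sum_range_succ_mk, quad]
  have h : ((p : ℤ) + 2 - 1).toNat = p.succ := by omega
  rw [h]
  refine Finset.sum_congr rfl fun i hi => ?_
  rw [Finset.mem_range] at hi
  have h1 : ((p : ℤ) + 2 - (i + 1)).toNat = p - i + 1 := by omega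
  have h2 : ((p : ℤ) + 2 - (i + 2)).toNat = p - i := by omega
  rw [h1, h2]
  rfl

theorem quad_of_le_one (F : B) {k : ℤ} (hk : k ≤ 1) : quad F k = 0 := by
  have h : (k - 1).toNat = 0 := by omega
  rw [quad, h, Finset.range_zero, Finset.sum_empty]

theorem sum_antidiagonal_half_add_swap (p : ℕ) (a : ℕ → ℕ → B) :
    ∑ ij ∈ Finset.HasAntidiagonal.antidiagonal p, (1/2 : ℚ) • (a ij.1 ij.2 + a ij.2 ij.1) =
      ∑ ij ∈ Finset.HasAntidiagonal.antidiagonal p, a ij.1 ij.2 := by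
  have h := Finset.Nat.sum_antidiagonal_swap (n := p) (f := fun ij : ℕ × ℕ => a ij.1 ij.2)
  simp only [Prod.fst_swap, Prod.snd_swap] at h
  rw [← Finset.smul_sum, Finset.sum_add_distrib, h, ← two_smul ℚ,
    smul_smul]
  norm_num

theorem nab_quad (F : B) (p : ℕ) :
    nab (quad F ((p : ℤ) + 2)) = ∑ ij ∈ Finset.HasAntidiagonal.antidiagonal p,
      ((ij.1 + 1).factorial * (ij.2 + 1).factorial : ℚ) • nabHalf F ij.1 ij.2 := by
  rw [← sum_antidiagonal_half_add_swap p fun i j =>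
    ((i + 1).factorial * (j + 1).factorial : ℚ) • nabHalf F i j]
  rw [quad_natCast_add_two, nab_eq_nabL, map_sum]
  refine Finset.sum_congr rfl fun ij _ => ?_
  rw [map_smul, ← nab_eq_nabL, nab_quadTerm]
  module

theorem Dcal_quad {F : B} (hy : ∀ k : ℕ, y F k = 0) (p : ℕ) :
    Dcal F (quad F ((p : ℤ) + 2)) = ∑ ij ∈ Finset.HasAntidiagonal.antidiagonal p,
      ((ij.1 + 1).factorial * (ij.2 + 1 + 1).factorial : ℚ) • nabHalf F ij.1 (ij.2 + 1) := by
  rw [← sum_antidiagonal_half_add_swap p fun i j =>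
    ((i + 1).factorial * (j + 1 + 1).factorial : ℚ) • nabHalf F i (j + 1)]
  rw [quad_natCast_add_two, Dcal_eq_DcalL, map_sum]
  refine Finset.sum_congr rfl fun ij _ => ?_
  rw [map_smul, ← Dcal_eq_DcalL, Dcal_quadTerm hy, Nat.factorial_succ (ij.2 + 1),
    Nat.factorial_succ (ij.1 + 1)]
  push_cast
  module

theorem Dcal_quad_sub_nab_quad {F : B} (hy : ∀ k : ℕ, y F k = 0) {k : ℤ} (hk : -1 ≤ k) :
    Dcal F (quad F k) - nab (quad F (k + 1)) =
      -(dd k 0 • (vB F * Delta (tauQ F (k - 1)) + epsB ^ 2 * nab (pdQ 0 (tauQ F (k - 1))))) := by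
  rcases lt_or_ge k 1 with h | h
  · rw [quad_of_le_one F (by omega), quad_of_le_one F (by omega), tauQ_of_neg F (by omega)]
    simp only [pdQ_eq_pderiv, nab_eq_nabL, Delta_eq_deltaL, Dcal_eq_DcalL, map_zero, mul_zero,
      add_zero, smul_zero, neg_zero, sub_zero]
  · obtain ⟨p, rfl⟩ : ∃ p : ℕ, k = (p : ℤ) + 1 := ⟨(k - 1).toNat, by omega⟩
    have hd := dd_natCast_zero (p + 1)
    push_cast at hd
    rw [hd, add_sub_cancel_right, tauQ_natCast, add_assoc, one_add_one_eq_two, nab_quad]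
    have hV : vB F * Delta (pdQ p F) + epsB ^ 2 * nab (pdQ 0 (pdQ p F)) = nabHalf F p 0 := by
      rw [nabHalf, vB, pdQ_comm 0 p, add_comm]
    rw [hV]
    rcases p with _ | p
    · rw [quad_of_le_one F (by norm_num), Dcal_eq_DcalL, map_zero]
      simp
    · have e : ((p + 1 : ℕ) : ℤ) + 1 = (p : ℤ) + 2 := by push_cast; ring
      rw [e, Dcal_quad hy, Finset.Nat.sum_antidiagonal_succ']
      simp

/-- exponents involving only the variables `ε`, `sᵢ`, `tᵢ` with `i ≤ N`. -/
def InvolvesUpTo (N : ℕ) (m : Idx →₀ ℕ) : Prop :=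
  ∀ i, N < i → m (some (Sum.inl i)) = 0 ∧ m (some (Sum.inr i)) = 0

theorem InvolvesUpTo.mono {N : ℕ} {m m' : Idx →₀ ℕ} (h : InvolvesUpTo N m) (hm : m' ≤ m) :
    InvolvesUpTo N m' := fun i hi =>
  ⟨Nat.le_zero.mp ((hm _).trans_eq (h i hi).1), Nat.le_zero.mp ((hm _).trans_eq (h i hi).2)⟩

theorem exists_involvesUpTo (m : Idx →₀ ℕ) : ∃ N, InvolvesUpTo N m := by
  let f : Idx → ℕ := fun j => j.elim 0 (Sum.elim id id)
  have h (j : Idx) (hj : m.support.sup f < f j) : m j = 0 := by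
    by_contra hne
    exact absurd (Finset.le_sup (f := f) (Finsupp.mem_support_iff.mpr hne)) (by omega)
  exact ⟨m.support.sup f, fun i hi => ⟨h _ hi, h _ hi⟩⟩

/-- the ideal of series with no monomial in `ε`, `sᵢ`, `tᵢ` with `i ≤ N` only. -/
def tailIdeal (N : ℕ) : Ideal B where
  carrier := {f | ∀ m, InvolvesUpTo N m → MvPowerSeries.coeff m f = 0}
  add_mem' hf hg m hm := by rw [map_add, hf m hm, hg m hm, add_zero]
  zero_mem' m _ := map_zero _
  smul_mem' f g hg m hm := by
    classical
    rw [smul_eq_mul, MvPowerSeries.coeff_mul]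
    refine Finset.sum_eq_zero fun p hp => ?_
    rw [hg p.2 (hm.mono ?_), mul_zero]
    rw [← Finset.HasAntidiagonal.mem_antidiagonal.mp hp]
    exact le_add_self

theorem pderiv_mem_tailIdeal {N : ℕ} {i : Idx} (hi : InvolvesUpTo N (Finsupp.single i 1)) {f : B}
    (hf : f ∈ tailIdeal N) : MvPowerSeries.pderiv Base i f ∈ tailIdeal N := fun m hm => by
  rw [MvPowerSeries.coeff_pderiv, hf _ fun j hj => ?_, zero_mul]
  rw [Finsupp.add_apply, Finsupp.add_apply, (hm j hj).1, (hm j hj).2, (hi j hj).1, (hi j hj).2]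
  exact ⟨rfl, rfl⟩

theorem iterate_Dop_mem_tailIdeal {N : ℕ} {f : B} (hf : f ∈ tailIdeal N) (n : ℕ) :
    Dop^[n] f ∈ tailIdeal N := by
  induction n with
  | zero => exact hf
  | succ n ih =>
    rw [Function.iterate_succ_apply', Dop_eq_pderiv]
    rw [Dop_eq_pderiv] at ih
    exact pderiv_mem_tailIdeal (fun j hj => by simp [(Nat.zero_lt_of_lt hj).ne]) ih

theorem epsSeries_mem_tailIdeal {N : ℕ} (a : ℕ → ℚ) (e : ℕ → ℕ) {f : B} (hf : f ∈ tailIdeal N) :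
    epsSeries a e f ∈ tailIdeal N := fun m hm => by
  refine Finset.sum_eq_zero (s := Finset.range (m none + 1))
    (f := fun j => cf (a j • Dop^[e j] f) (m - Finsupp.single none j)) fun j _ => ?_
  change a j • MvPowerSeries.coeff (m - Finsupp.single none j) (Dop^[e j] f) = 0
  rw [iterate_Dop_mem_tailIdeal hf _ _ (hm.mono tsub_le_self), smul_zero]

theorem nab_mem_tailIdeal {N : ℕ} {f : B} (hf : f ∈ tailIdeal N) : nab f ∈ tailIdeal N :=
  epsSeries_mem_tailIdeal _ _ hf

theorem Dcal_mem_tailIdeal (F : B) {N : ℕ} {f : B} (hf : f ∈ tailIdeal N) :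
    Dcal F f ∈ tailIdeal N := by
  refine (tailIdeal N).add_mem ((tailIdeal N).mul_mem_left _ (nab_mem_tailIdeal hf))
    (epsSeries_mem_tailIdeal _ _ ?_)
  rw [pdQ_eq_pderiv]
  exact pderiv_mem_tailIdeal (fun j hj => by simp [(Nat.zero_lt_of_lt hj).ne]) hf

theorem coeff_X_mul_eq (j : Idx) (f : B) (m : Idx →₀ ℕ) :
    MvPowerSeries.coeff m (MvPowerSeries.X j * f) =
      if m j ≠ 0 then cf f (m - Finsupp.single j 1) else 0 := by
  classical
  rw [← pow_one (MvPowerSeries.X j), MvPowerSeries.X_pow_eq, MvPowerSeries.coeff_monomial_mul]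
  simp only [Finsupp.single_le_iff, one_mul, Nat.one_le_iff_ne_zero]
  rfl

theorem sum_support_eq_coeff_sum {N : ℕ} {m : Idx →₀ ℕ} (hm : InvolvesUpTo N m) (a : Idx → B)
    (ha : a none = 0) :
    ∑ j ∈ m.support, cf (a j) (m - Finsupp.single j 1) =
      MvPowerSeries.coeff m (∑ i ∈ Finset.range (N + 1),
        (tVar i * a (some (Sum.inr i)) + sVar i * a (some (Sum.inl i)))) := by
  classical
  have hsub : m.support ⊆
      Finset.insertNone ((Finset.range (N + 1)).disjSum (Finset.range (N + 1))) := by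
    intro j hj
    rw [Finsupp.mem_support_iff] at hj
    rcases j with _ | i | i
    · simp
    · have := mt (fun h => (hm i h).1) hj
      simpa using by omega
    · have := mt (fun h => (hm i h).2) hj
      simpa using by omega
  have h (j : Idx) (hj : j ∈ m.support) : cf (a j) (m - Finsupp.single j 1) =
      MvPowerSeries.coeff m (MvPowerSeries.X j * a j) := by
    rw [coeff_X_mul_eq, if_pos (Finsupp.mem_support_iff.mp hj)]
  rw [Finset.sum_congr rfl h, Finset.sum_subset hsub fun j _ hj => ?_]
  · rw [Finset.sum_insertNone, ha, mul_zero, map_zero, zero_add, Finset.sum_disjSum,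
      map_sum, ← Finset.sum_add_distrib]
    refine Finset.sum_congr rfl fun i _ => ?_
    rw [map_add, add_comm]
    rfl
  · rw [coeff_X_mul_eq, if_neg (by simpa using hj)]

/-- the Virasoro constraint with its linear part truncated to `sₘ`, `tₘ` with `m ≤ N`. -/
def zTrunc (F : B) (N : ℕ) (k : ℤ) : B :=
  ∑ m ∈ Finset.range (N + 1), linTerm F k m
  - cc k 1 • tauP F (1 + k) - (2 * dd k 1) • tauQ F k
  + quad F k
  + (if k = -1 then sVar 0 * tVar 0 else 0)
  + (if k = 0 then sVar 0 ^ 2 else 0)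

theorem z_sub_zTrunc_mem_tailIdeal (F : B) (N : ℕ) (k : ℤ) :
    z F k - zTrunc F N k ∈ tailIdeal N := by
  intro m hm
  rw [z, zTrunc, add_sub_add_right_eq_sub, add_sub_add_right_eq_sub, add_sub_add_right_eq_sub,
    sub_sub_sub_cancel_right, sub_sub_sub_cancel_right, map_sub, sub_eq_zero]
  let a : Idx → B := fun j => match j with
    | some (Sum.inr i) => cc k (i+1) • tauQ F (i + k)
    | some (Sum.inl i) => cc k i • tauP F (i + k) + (2 * dd k i) • tauQ F (i + k - 1)
    | none => 0
  have h := sum_support_eq_coeff_sum hm a rfl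
  have hlin (i : ℕ) : tVar i * a (some (Sum.inr i)) + sVar i * a (some (Sum.inl i)) =
      linTerm F k i := by
    simp only [a, linTerm, mul_add, mul_smul_comm, add_assoc]
  simp only [hlin] at h
  rw [← h]
  refine Finset.sum_congr (M := Base) rfl fun j _ => ?_
  rcases j with _ | i | i <;> rfl

theorem Dcal_correction_sub_nab_correction {F : B} (hy : ∀ k : ℕ, y F k = 0) {k : ℤ}
    (hk : -1 ≤ k) :
    Dcal F (cc k 1 • tauP F (1 + k) + (2 * dd k 1) • tauQ F k) -
      nab (cc (k + 1) 1 • tauP F (1 + (k + 1)) + (2 * dd (k + 1) 1) • tauQ F (k + 1)) =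
      cc k 1 • xInt F (1 + k) := by
  have h : dd k 1 • (if k = -1 then vB F else 0) = 0 := by
    split_ifs with h
    · rw [h, dd_neg_one, zero_smul]
    · rw [smul_zero]
  have e : 1 + (k + 1) = 1 + k + 1 := by ring
  rw [Dcal_eq_DcalL, nab_eq_nabL]
  simp only [map_add, map_smul]
  simp only [← Dcal_eq_DcalL, ← nab_eq_nabL, Dcal_tauQ hy, xInt, cc_succ hk, dd_succ hk, e,
    add_comm 1 k]
  push_cast
  linear_combination (norm := module) (-2 : ℚ) • h

theorem Dcal_delta_sub_nab_delta (F : B) {k : ℤ} (hk : -1 ≤ k) :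
    Dcal F ((if k = -1 then sVar 0 * tVar 0 else 0) + (if k = 0 then sVar 0 ^ 2 else 0)) -
      nab ((if k + 1 = -1 then sVar 0 * tVar 0 else 0) +
        (if k + 1 = 0 then sVar 0 ^ 2 else 0)) =
      (if k = -1 then tVar 0 * vB F else 0) +
        if k = 0 then (2 : ℚ) • (sVar 0 * vB F) else 0 := by
  have hnab : nab (sVar 0 ^ 2) = 2 * sVar 0 := by
    refine mul_left_cancel₀ two_ne_zero_B ?_
    rw [pow_two, two_mul_nab_mul, nab_eq_Dop (Dop_Dop_sVar 0), Delta_eq_two_mul (Dop_Dop_sVar 0),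
      Dop_sVar, if_pos rfl]
    ring
  rcases hk.eq_or_lt with rfl | hk
  · norm_num
    rw [hnab, mul_comm (sVar 0), Dcal_tVar_mul, if_pos rfl, Dcal, pdQ_sVar,
      nab_eq_Dop (Dop_Dop_sVar 0), Delta_eq_two_mul (Dop_Dop_sVar 0), Delta_eq_deltaL, map_zero,
      Dop_sVar, if_pos rfl]
    ring
  · have h1 : k ≠ -1 := by omega
    have h2 : k + 1 ≠ -1 := by omega
    have h3 : k + 1 ≠ 0 := by omega
    simp only [if_neg h1, if_neg h2, if_neg h3, zero_add, nab_eq_nabL, map_zero, sub_zero]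
    rw [nab_eq_nabL] at hnab
    split_ifs with h
    · rw [Dcal, nab_eq_nabL, hnab, pow_two, pdQ_mul, pdQ_sVar, mul_zero, zero_mul, add_zero, Delta_eq_deltaL,
        map_zero, two_smul]
      ring
    · rw [Dcal_eq_DcalL, map_zero]

theorem Dcal_zTrunc_sub_nab_zTrunc {F : B} (hy : ∀ k : ℕ, y F k = 0) (N : ℕ) {k : ℤ}
    (hk : -1 ≤ k) :
    Dcal F (zTrunc F N k) - nab (zTrunc F N (k + 1)) =
      ∑ m ∈ Finset.range (N + 1), cc k m • (sVar m * xInt F (m + k)) -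
        cc k 1 • xInt F (1 + k) := by
  have hsum : Dcal F (∑ m ∈ Finset.range (N + 1), linTerm F k m) -
      nab (∑ m ∈ Finset.range (N + 1), linTerm F (k + 1) m) =
      ∑ m ∈ Finset.range (N + 1), cc k m • (sVar m * xInt F (m + k)) + zeroBracket F k := by
    have h0 : zeroBracket F k =
        ∑ m ∈ Finset.range (N + 1), if m = 0 then zeroBracket F k else 0 := by simp
    rw [h0, ← Finset.sum_add_distrib, Dcal_eq_DcalL, nab_eq_nabL, map_sum, map_sum,
      ← Finset.sum_sub_distrib]
    exact Finset.sum_congr rfl fun m _ => Dcal_linTerm_sub_nab_linTerm hy hk m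
  have hcorr := Dcal_correction_sub_nab_correction hy hk
  have hquad := Dcal_quad_sub_nab_quad hy hk
  have hdelta := Dcal_delta_sub_nab_delta F hk
  rw [zeroBracket] at hsum
  rw [zTrunc, zTrunc, Dcal_eq_DcalL, nab_eq_nabL] at *
  simp only [map_add, map_sub] at *
  linear_combination hsum - hcorr + hquad + hdelta

theorem x_relation_mem_tailIdeal {F : B} (hz : ∀ k : ℤ, -1 ≤ k → z F k = 0)
    (hy : ∀ k : ℕ, y F k = 0) (N : ℕ) {k : ℤ} (hk : -1 ≤ k) :
    ∑ m ∈ Finset.range (N + 1), cc k m • (sVar m * xInt F (m + k)) -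
      cc k 1 • xInt F (1 + k) ∈ tailIdeal N := by
  have h {k : ℤ} (hk : -1 ≤ k) : zTrunc F N k ∈ tailIdeal N := by
    have := z_sub_zTrunc_mem_tailIdeal F N k
    rwa [hz k hk, zero_sub, neg_mem_iff] at this
  rw [← Dcal_zTrunc_sub_nab_zTrunc hy N hk]
  exact (tailIdeal N).sub_mem (Dcal_mem_tailIdeal F (h hk)) (nab_mem_tailIdeal (h (by omega)))

theorem coeff_xInt_eq_zero {F : B} (hz : ∀ k : ℤ, -1 ≤ k → z F k = 0)
    (hy : ∀ k : ℕ, y F k = 0) (m : Idx →₀ ℕ) (k : ℤ) (hk : -1 ≤ k) :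
    MvPowerSeries.coeff m (xInt F k) = 0 := by
  induction hd : m.degree using Nat.strong_induction_on generalizing m k with
  | _ d ih =>
  rcases hk.eq_or_lt with rfl | hk
  · rw [xInt_neg_one, map_zero]
  lift k to ℕ using by omega
  obtain ⟨N, hN⟩ := exists_involvesUpTo m
  have hsmul (c : ℚ) (f : B) :
      MvPowerSeries.coeff m (c • f) = c • MvPowerSeries.coeff m f := rfl
  have hrel := x_relation_mem_tailIdeal hz hy N (k := (k : ℤ) - 1) (by omega) m hN
  have hsum : MvPowerSeries.coeff m (∑ i ∈ Finset.range (N + 1),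
      cc ((k : ℤ) - 1) i • (sVar i * xInt F (i + ((k : ℤ) - 1)))) = 0 := by
    rw [map_sum]
    refine Finset.sum_eq_zero fun i _ => ?_
    rw [hsmul, sVar, coeff_X_mul_eq]
    split_ifs with hi
    · have hle : Finsupp.single (some (Sum.inl i)) 1 ≤ m :=
        Finsupp.single_le_iff.mpr (Nat.one_le_iff_ne_zero.mpr hi)
      have hdeg := congrArg Finsupp.degree (tsub_add_cancel_of_le hle)
      rw [map_add, Finsupp.degree_single] at hdeg
      have := ih _ (by omega) (m - Finsupp.single (some (Sum.inl i)) 1)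
        ((i : ℤ) + ((k : ℤ) - 1)) (by omega) rfl
      rw [cf]
      exact (congrArg _ this).trans (smul_zero _)
    · rw [smul_zero]
  rw [map_sub, hsum, zero_sub, neg_eq_zero, add_sub_cancel, cc_one_right, hsmul] at hrel
  exact (smul_eq_zero.mp hrel).resolve_left (Nat.cast_ne_zero.mpr k.factorial_ne_zero)

theorem virasoro_and_toda_imply_P_recursion (F : B)
    (hz : ∀ k : ℤ, -1 ≤ k → z F k = 0)
    (hy : ∀ k : ℕ, y F k = 0) :
    ∀ k : ℕ, x F k = 0 := by
  intro k
  rw [← xInt_natCast]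
  exact MvPowerSeries.ext fun m => coeff_xInt_eq_zero hz hy m k (by omega)

end
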